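/- Let f: ℝ → ℂ be a continuous 2π-periodic function, 0 ≤ α < 1/4, N a positive integer, x̃_{−N},…,x̃_N a set of α-perturbed nodes, and w̃_{−N},…,w̃_N the unique quadrature weights exact on T_N at these nodes. Writing Ĩ_N(f) = Σ_{j=−N}^{N} w̃_j f(x̃_j) and I(f) = ∫_{−π}^{π} f(x) dx, one has |Ĩ_N(f) − I(f)| ≤ (4π/(cos(πα) − sin(πα))) · min_{q ∈ T_N} ‖f − q‖_{L^∞[−π,π)}. -/

import Mathlib

open Real Finset

/-- `q` is a trigonometric polynomial of degree ≤ N. -/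
def IsTrigPoly (N : ℕ) (q : ℝ → ℂ) : Prop :=
  ∃ c : ℤ → ℂ, ∀ x : ℝ,
    q x = ∑ k ∈ Finset.Icc (-(N:ℤ)) (N:ℤ), c k * Complex.exp (Complex.I * (k : ℂ) * (x : ℂ))

/-- `x` is a set of α-perturbed nodes of size 2N+1. -/
def PerturbedNodes (N : ℕ) (α : ℝ) (x : ℤ → ℝ) : Prop :=
  ∀ j ∈ Finset.Icc (-(N:ℤ)) (N:ℤ),
    |x j - (j : ℝ) * (2*π/(2*N+1))| ≤ α * (2*π/(2*N+1))

/-- The weights `w` form a quadrature rule at the nodes `x` that is exact on `T_N`. -/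
def ExactQuad (N : ℕ) (x : ℤ → ℝ) (w : ℤ → ℝ) : Prop :=
  ∀ q : ℝ → ℂ, IsTrigPoly N q →
    ∑ j ∈ Finset.Icc (-(N:ℤ)) (N:ℤ), (w j : ℂ) * q (x j) = ∫ t in (-π)..π, q t

/-- The supremum of `‖g‖` over `[−π, π)`. -/
noncomputable def supIco (g : ℝ → ℂ) : ℝ :=
  ⨆ x : Set.Ico (-π) π, ‖g x‖

/-- A continuous function on `[-π, π]` with equal endpoint values and summable Fourier coefficients
is the sum of its Fourier series. -/
theorem hasSum_fourier_of_summable_integral {F : ℝ → ℂ} (hF : Continuous F) (hper : F (-π) = F π)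
    {c : ℤ → ℂ}
    (hc : ∀ n : ℤ, ∫ t in (-π)..π, Complex.exp (-(Complex.I * n * t)) * F t = 2 * π * c n)
    (hs : Summable c) {t : ℝ} (ht : t ∈ Set.Ico (-π) π) :
    HasSum (fun n : ℤ => c n * Complex.exp (Complex.I * n * t)) (F t) := by
  have hpos : (0 : ℝ) < 2 * π := by positivity
  have : Fact ((0 : ℝ) < 2 * π) := ⟨hpos⟩
  have hend : -π + 2 * π = π := by ring
  have hpi : (π : ℂ) ≠ 0 := by exact_mod_cast pi_ne_zero
  have hexp : ∀ (n : ℤ) (s : ℝ),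
      fourier n (s : AddCircle (2 * π)) = Complex.exp (Complex.I * n * s) := by
    intro n s
    rw [fourier_coe_apply]
    congr 1
    push_cast
    field_simp
  let g : C(AddCircle (2 * π), ℂ) :=
    ⟨AddCircle.liftIco (2 * π) (-π) F,
      AddCircle.liftIco_continuous (by rw [hend]; exact hper) hF.continuousOn⟩
  have hcoeff : fourierCoeff g = c := by
    ext n
    rw [fourierCoeff_eq_intervalIntegral _ _ (-π), hend]
    have : ∫ s in (-π)..π, fourier (-n) (s : AddCircle (2 * π)) • g s = 2 * π * c n := by
      rw [← hc n]
      refine intervalIntegral.integral_congr_Ioo_of_le (by linarith [pi_pos]) fun s hs => ?_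
      have : g s = F s := AddCircle.liftIco_coe_apply ⟨hs.1.le, by rw [hend]; exact hs.2⟩
      simp only [this, hexp, smul_eq_mul]
      push_cast
      ring_nf
    rw [this, Complex.real_smul]
    push_cast
    field_simp
  have key := has_pointwise_sum_fourier_series_of_summable (f := g) (hcoeff ▸ hs)
    (t : AddCircle (2 * π))
  have hgt : g t = F t := AddCircle.liftIco_coe_apply ⟨ht.1, by rw [hend]; exact ht.2⟩
  simpa only [hcoeff, hgt, hexp, smul_eq_mul] using key

theorem integral_exp_I_mul_eq_sinc (a : ℝ) :
    ∫ t in (-π)..π, Complex.exp (Complex.I * a * t) = 2 * π * sinc (π * a) := by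
  rcases eq_or_ne a 0 with rfl | ha
  · simp only [Complex.ofReal_zero, mul_zero, zero_mul, Complex.exp_zero,
      intervalIntegral.integral_const, sinc_zero]
    rw [Complex.real_smul]
    push_cast
    ring
  · have hac : (a : ℂ) ≠ 0 := by exact_mod_cast ha
    have hpi : (π : ℂ) ≠ 0 := by exact_mod_cast pi_ne_zero
    rw [integral_exp_mul_complex (mul_ne_zero Complex.I_ne_zero hac),
      sinc_of_ne_zero (mul_ne_zero pi_ne_zero ha)]
    push_cast
    rw [Complex.sin]
    have h1 : Complex.I * a * π = π * a * Complex.I := by ring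
    have h2 : Complex.I * a * -π = -(π * a) * Complex.I := by ring
    rw [h1, h2]
    field_simp
    rw [Complex.I_sq]
    ring

/-- The Fourier coefficients of `cos (δ t)` with respect to `exp (i n t)` on `[-π, π]`. -/
noncomputable def cosCoeff (δ : ℝ) (n : ℤ) : ℝ :=
  (sinc (π * (δ - n)) + sinc (π * (δ + n))) / 2

/-- The Fourier coefficients of `i sin (δ t)` with respect to
`exp (i (n - 1/2) t)` on `[-π, π]`. -/
noncomputable def sinCoeff (δ : ℝ) (n : ℤ) : ℝ :=
  (sinc (π * (δ - (n - 1 / 2))) - sinc (π * (δ + (n - 1 / 2)))) / 2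

theorem integral_cos_mul_eq_cosCoeff (δ : ℝ) (n : ℤ) :
    ∫ t in (-π)..π, Complex.exp (-(Complex.I * n * t)) * Complex.cos (δ * t) =
      2 * π * cosCoeff δ n := by
  have h : ∀ t : ℝ, Complex.exp (-(Complex.I * n * t)) * Complex.cos (δ * t) =
      (1 / 2) * Complex.exp (Complex.I * (δ - n : ℝ) * t) +
      (1 / 2) * Complex.exp (Complex.I * (-(δ + n) : ℝ) * t) := by
    intro t
    rw [Complex.cos, mul_div_assoc', mul_add, ← Complex.exp_add, ← Complex.exp_add]
    push_cast
    ring_nf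
  simp only [h]
  rw [intervalIntegral.integral_add, intervalIntegral.integral_const_mul,
    intervalIntegral.integral_const_mul, integral_exp_I_mul_eq_sinc, integral_exp_I_mul_eq_sinc,
    mul_neg, sinc_neg, cosCoeff]
  · push_cast
    ring
  all_goals exact (by fun_prop : Continuous _).intervalIntegrable _ _

theorem integral_sin_mul_eq_sinCoeff (δ : ℝ) (n : ℤ) :
    ∫ t in (-π)..π, Complex.exp (-(Complex.I * n * t)) *
      (Complex.sin (δ * t) * Complex.exp (Complex.I * t / 2)) =
      2 * π * (-Complex.I * sinCoeff δ n) := by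
  have h : ∀ t : ℝ, Complex.exp (-(Complex.I * n * t)) *
      (Complex.sin (δ * t) * Complex.exp (Complex.I * t / 2)) =
      (-Complex.I / 2) * Complex.exp (Complex.I * (δ - (n - 1 / 2) : ℝ) * t) +
      (Complex.I / 2) * Complex.exp (Complex.I * (-(δ + (n - 1 / 2)) : ℝ) * t) := by
    intro t
    have e1 : Complex.exp (Complex.I * (δ - (n - 1 / 2) : ℝ) * t) =
        Complex.exp (-(Complex.I * n * t)) * Complex.exp (δ * t * Complex.I) *
          Complex.exp (Complex.I * t / 2) := by
      rw [← Complex.exp_add, ← Complex.exp_add]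
      push_cast
      ring_nf
    have e2 : Complex.exp (Complex.I * (-(δ + (n - 1 / 2)) : ℝ) * t) =
        Complex.exp (-(Complex.I * n * t)) * Complex.exp (-(δ * t) * Complex.I) *
          Complex.exp (Complex.I * t / 2) := by
      rw [← Complex.exp_add, ← Complex.exp_add]
      push_cast
      ring_nf
    rw [e1, e2, Complex.sin]
    ring
  simp only [h]
  rw [intervalIntegral.integral_add, intervalIntegral.integral_const_mul,
    intervalIntegral.integral_const_mul, integral_exp_I_mul_eq_sinc, integral_exp_I_mul_eq_sinc,
    mul_neg, sinc_neg, sinCoeff]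
  · push_cast
    ring
  all_goals exact (by fun_prop : Continuous _).intervalIntegrable _ _

theorem one_le_sq_of_int_ne_zero {n : ℤ} (hn : n ≠ 0) : (1 : ℝ) ≤ (n : ℝ) ^ 2 := by
  exact_mod_cast (sq_pos_of_ne_zero hn : 0 < n ^ 2)

theorem sq_le_of_abs_le_quarter {δ : ℝ} (hδ : |δ| ≤ 1 / 4) : δ ^ 2 ≤ 1 / 16 := by
  rw [← sq_abs]
  nlinarith [abs_nonneg δ]

theorem cosCoeff_eq {δ : ℝ} (hδ : |δ| ≤ 1 / 4) {n : ℤ} (hn : n ≠ 0) :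
    cosCoeff δ n = -cos (n * π) * (δ * sin (π * δ) / (π * ((n : ℝ) ^ 2 - δ ^ 2))) := by
  have h1 := one_le_sq_of_int_ne_zero hn
  have h2 := sq_le_of_abs_le_quarter hδ
  have h3 : (n : ℝ) ^ 2 - δ ^ 2 ≠ 0 := by linarith
  have h4 : δ - n ≠ 0 := fun h => h3 (by linear_combination (-(n : ℝ) - δ) * h)
  have h5 : δ + n ≠ 0 := fun h => h3 (by linear_combination ((n : ℝ) - δ) * h)
  have hs : sin (n * π) = 0 := sin_int_mul_pi n
  rw [cosCoeff, sinc_of_ne_zero (mul_ne_zero pi_ne_zero h4),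
    sinc_of_ne_zero (mul_ne_zero pi_ne_zero h5)]
  have e1 : sin (π * (δ - n)) = sin (π * δ) * cos (n * π) := by
    rw [mul_sub, sin_sub, mul_comm π (n : ℝ), hs]; ring
  have e2 : sin (π * (δ + n)) = sin (π * δ) * cos (n * π) := by
    rw [mul_add, sin_add, mul_comm π (n : ℝ), hs]; ring
  rw [e1, e2]
  field_simp
  ring

theorem half_int_sq_ge (n : ℤ) :
    (3 / 32 : ℝ) * ((n : ℝ) ^ 2 + 1) + 1 / 16 ≤ ((n : ℝ) - 1 / 2) ^ 2 := by
  have : (0 : ℤ) ≤ (n - 1) * (29 * n - 3) := by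
    rcases le_or_gt n 0 with h | h
    · nlinarith
    · nlinarith
  have h : (0 : ℝ) ≤ ((n : ℝ) - 1) * (29 * n - 3) := by exact_mod_cast this
  nlinarith

theorem sinCoeff_eq {δ : ℝ} (hδ : |δ| ≤ 1 / 4) (n : ℤ) :
    sinCoeff δ n =
      -cos (n * π) * (δ * cos (π * δ) / (π * (((n : ℝ) - 1 / 2) ^ 2 - δ ^ 2))) := by
  have h1 := half_int_sq_ge n
  have h2 := sq_le_of_abs_le_quarter hδ
  have h3 : ((n : ℝ) - 1 / 2) ^ 2 - δ ^ 2 ≠ 0 := by nlinarith [sq_nonneg (n : ℝ)]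
  have hs : sin (n * π) = 0 := sin_int_mul_pi n
  have c1 : cos (π * ((n : ℝ) - 1 / 2)) = 0 := by
    rw [show π * ((n : ℝ) - 1 / 2) = n * π - π / 2 by ring, cos_sub_pi_div_two, hs]
  have s1 : sin (π * ((n : ℝ) - 1 / 2)) = -cos (n * π) := by
    rw [show π * ((n : ℝ) - 1 / 2) = n * π - π / 2 by ring, sin_sub_pi_div_two]
  rw [sinCoeff]
  generalize (n : ℝ) - 1 / 2 = β at *
  have h4 : δ - β ≠ 0 := fun h => h3 (by linear_combination (-β - δ) * h)
  have h5 : δ + β ≠ 0 := fun h => h3 (by linear_combination (β - δ) * h)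
  rw [sinc_of_ne_zero (mul_ne_zero pi_ne_zero h4), sinc_of_ne_zero (mul_ne_zero pi_ne_zero h5)]
  rw [mul_sub, sin_sub, mul_add, sin_add, c1, s1, ← mul_sub, ← mul_add]
  field_simp
  ring

theorem cosCoeff_abs (δ : ℝ) (n : ℤ) : cosCoeff |δ| n = cosCoeff δ n := by
  rcases abs_choice δ with h | h
  · rw [h]
  · rw [h, cosCoeff, cosCoeff, show π * (-δ - n) = -(π * (δ + n)) by ring,
      show π * (-δ + n) = -(π * (δ - n)) by ring, sinc_neg, sinc_neg, add_comm]

theorem abs_sinCoeff_abs (δ : ℝ) (n : ℤ) : |sinCoeff |δ| n| = |sinCoeff δ n| := by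
  rcases abs_choice δ with h | h
  · rw [h]
  · rw [h, sinCoeff, sinCoeff, show π * (-δ - (n - 1 / 2)) = -(π * (δ + (n - 1 / 2))) by ring,
      show π * (-δ + (n - 1 / 2)) = -(π * (δ - (n - 1 / 2))) by ring, sinc_neg, sinc_neg,
      ← abs_neg]
    ring_nf

theorem cosCoeff_zero_right (δ : ℝ) : cosCoeff δ 0 = sinc (π * δ) := by
  simp [cosCoeff]

theorem sinc_le_sinc_of_le {x y : ℝ} (hx : 0 ≤ x) (hxy : x ≤ y) (hy : y ≤ π) :
    sinc y ≤ sinc x := by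
  rcases hx.eq_or_lt with rfl | hx
  · simpa using sinc_le_one y
  have hy0 : 0 < y := hx.trans_le hxy
  rw [sinc_of_ne_zero hx.ne', sinc_of_ne_zero hy0.ne', div_le_div_iff₀ hy0 hx]
  have hxy0 : 0 ≤ x / y := by positivity
  have h := strictConcaveOn_sin_Icc.concaveOn.2 (⟨hy0.le, hy⟩ : y ∈ Set.Icc 0 π)
    (⟨le_rfl, pi_pos.le⟩ : (0 : ℝ) ∈ Set.Icc 0 π) hxy0
    (sub_nonneg.2 ((div_le_one hy0).2 hxy)) (add_sub_cancel (x / y) 1)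
  simp only [smul_eq_mul, sin_zero, mul_zero, add_zero, div_mul_cancel₀ x hy0.ne'] at h
  rw [div_mul_eq_mul_div, div_le_iff₀ hy0] at h
  linarith

theorem mul_cos_le_mul_cos {d a : ℝ} (hd : 0 ≤ d) (hda : d ≤ a) (ha : a ≤ 1 / 4) :
    d * cos (π * d) ≤ a * cos (π * a) := by
  have hpi := pi_pos
  have hpi4 := pi_le_four
  have hcos : √2 / 2 ≤ cos (π * a) := by
    rw [← cos_pi_div_four]
    exact cos_le_cos_of_nonneg_of_le_pi (by nlinarith) (by linarith) (by nlinarith)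
  have hsin : sin ((π * d + π * a) / 2) ≤ √2 / 2 := by
    rw [← sin_pi_div_four]
    exact sin_le_sin_of_le_of_le_pi_div_two (by nlinarith) (by linarith) (by nlinarith)
  have hsin0 : 0 ≤ sin ((π * d + π * a) / 2) :=
    sin_nonneg_of_nonneg_of_le_pi (by nlinarith) (by nlinarith)
  have hlin : sin ((π * a - π * d) / 2) ≤ (π * a - π * d) / 2 := sin_le (by nlinarith)
  have hdiff : cos (π * d) - cos (π * a) ≤ √2 / 2 * (π * (a - d)) := by
    have e : cos (π * d) - cos (π * a) =
        2 * sin ((π * d + π * a) / 2) * sin ((π * a - π * d) / 2) := by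
      rw [cos_sub_cos, show (π * d - π * a) / 2 = -((π * a - π * d) / 2) by ring, sin_neg]
      ring
    have h0 : 0 ≤ (π * a - π * d) / 2 := by nlinarith
    rw [e]
    nlinarith [mul_le_mul_of_nonneg_left hlin hsin0, mul_le_mul_of_nonneg_right hsin h0]
  have hs : 0 ≤ √2 / 2 := by positivity
  have h1 : d * (cos (π * d) - cos (π * a)) ≤ (a - d) * (√2 / 2) := by
    have hdpi : d * π ≤ 1 := by nlinarith
    calc d * (cos (π * d) - cos (π * a)) ≤ d * (√2 / 2 * (π * (a - d))) := by gcongr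
      _ = (d * π) * ((a - d) * (√2 / 2)) := by ring
      _ ≤ 1 * ((a - d) * (√2 / 2)) := by
        have : 0 ≤ (a - d) * (√2 / 2) := mul_nonneg (by linarith) hs
        gcongr
      _ = _ := one_mul _
  nlinarith [mul_le_mul_of_nonneg_left hcos (sub_nonneg.2 hda)]

/-- A bound, uniform in `|δ| ≤ α`, for the Fourier coefficients of `cos (δ t) - 1`. -/
noncomputable def cosBound (α : ℝ) (n : ℤ) : ℝ :=
  (if n = 0 then 1 else 0) - cos (n * π) * cosCoeff α n

/-- A bound, uniform in `|δ| ≤ α`, for the half-integer Fourier coefficients of `sin (δ t)`. -/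
noncomputable def sinBound (α : ℝ) (n : ℤ) : ℝ :=
  -cos (n * π) * sinCoeff α n

theorem cos_int_mul_pi_mul_self (n : ℤ) : cos (n * π) * cos (n * π) = 1 := by
  rw [← abs_mul_abs_self, abs_cos_int_mul_pi, one_mul]

theorem cosBound_eq {α : ℝ} (hα : |α| ≤ 1 / 4) {n : ℤ} (hn : n ≠ 0) :
    cosBound α n = α * sin (π * α) / (π * ((n : ℝ) ^ 2 - α ^ 2)) := by
  rw [cosBound, if_neg hn, cosCoeff_eq hα hn]
  linear_combination (α * sin (π * α) / (π * ((n : ℝ) ^ 2 - α ^ 2))) * cos_int_mul_pi_mul_self n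

theorem sinBound_eq {α : ℝ} (hα : |α| ≤ 1 / 4) (n : ℤ) :
    sinBound α n = α * cos (π * α) / (π * (((n : ℝ) - 1 / 2) ^ 2 - α ^ 2)) := by
  rw [sinBound, sinCoeff_eq hα]
  linear_combination
    (α * cos (π * α) / (π * (((n : ℝ) - 1 / 2) ^ 2 - α ^ 2))) * cos_int_mul_pi_mul_self n

theorem abs_cosCoeff_sub_le_cosBound {δ α : ℝ} (hδ : |δ| ≤ α) (hα : α ≤ 1 / 4) (n : ℤ) :
    |cosCoeff δ n - if n = 0 then 1 else 0| ≤ cosBound α n := by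
  have hpi := pi_pos
  have hα0 : 0 ≤ α := (abs_nonneg δ).trans hδ
  have hα' : |α| ≤ 1 / 4 := by rwa [abs_of_nonneg hα0]
  rw [← cosCoeff_abs]
  have hd0 := abs_nonneg δ
  generalize |δ| = d at *
  have hd' : |d| ≤ 1 / 4 := by rw [abs_of_nonneg hd0]; linarith
  rcases eq_or_ne n 0 with rfl | hn
  · have h := sinc_le_sinc_of_le (x := π * d) (y := π * α) (by positivity)
      (by gcongr) (by nlinarith)
    rw [cosBound, cosCoeff_zero_right, cosCoeff_zero_right, if_pos rfl, abs_sub_comm,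
      abs_of_nonneg (sub_nonneg.2 (sinc_le_one _))]
    simpa using by linarith
  · have hn1 := one_le_sq_of_int_ne_zero hn
    have hα2 := sq_le_of_abs_le_quarter hα'
    have hd2 := sq_le_of_abs_le_quarter hd'
    have hsin0 : 0 ≤ sin (π * d) := sin_nonneg_of_nonneg_of_le_pi (by positivity) (by nlinarith)
    have hsin : sin (π * d) ≤ sin (π * α) :=
      sin_le_sin_of_le_of_le_pi_div_two (by nlinarith) (by nlinarith) (by gcongr)
    have hsinα : 0 ≤ sin (π * α) := hsin0.trans hsin
    have hpos : 0 < (n : ℝ) ^ 2 - α ^ 2 := by linarith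
    have hposd : 0 < (n : ℝ) ^ 2 - d ^ 2 := by linarith
    rw [if_neg hn, sub_zero, cosBound_eq hα' hn, cosCoeff_eq hd' hn, abs_mul, abs_neg,
      abs_cos_int_mul_pi, one_mul, abs_of_nonneg (by positivity)]
    gcongr

theorem abs_sinCoeff_le_sinBound {δ α : ℝ} (hδ : |δ| ≤ α) (hα : α ≤ 1 / 4) (n : ℤ) :
    |sinCoeff δ n| ≤ sinBound α n := by
  have hpi := pi_pos
  have hα0 : 0 ≤ α := (abs_nonneg δ).trans hδ
  have hα' : |α| ≤ 1 / 4 := by rwa [abs_of_nonneg hα0]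
  rw [← abs_sinCoeff_abs]
  have hd0 := abs_nonneg δ
  generalize |δ| = d at *
  have hd' : |d| ≤ 1 / 4 := by rw [abs_of_nonneg hd0]; linarith
  have hn1 := half_int_sq_ge n
  have hα2 := sq_le_of_abs_le_quarter hα'
  have hd2 := sq_le_of_abs_le_quarter hd'
  have hcos0 : 0 ≤ cos (π * d) :=
    cos_nonneg_of_neg_pi_div_two_le_of_le (by nlinarith) (by nlinarith)
  have hpos : 0 < ((n : ℝ) - 1 / 2) ^ 2 - α ^ 2 := by nlinarith [sq_nonneg (n : ℝ)]
  have hposd : 0 < ((n : ℝ) - 1 / 2) ^ 2 - d ^ 2 := by nlinarith [sq_nonneg (n : ℝ)]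
  have hmono := mul_cos_le_mul_cos hd0 hδ hα
  have h0 : 0 ≤ d * cos (π * d) := by positivity
  rw [sinBound_eq hα', sinCoeff_eq hd', abs_mul, abs_neg, abs_cos_int_mul_pi, one_mul,
    abs_of_nonneg (by positivity)]
  exact div_le_div₀ (h0.trans hmono) hmono (by positivity) (by gcongr)

theorem abs_div_le_one_div_sq {a b : ℝ} {n : ℤ} (hn : n ≠ 0) (ha : |a| ≤ 1 / 4)
    (hb : 3 / 32 * (n : ℝ) ^ 2 ≤ b) : |a / (π * b)| ≤ 1 / (n : ℝ) ^ 2 := by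
  have hn1 := one_le_sq_of_int_ne_zero hn
  have hb0 : 0 < b := by linarith
  rw [abs_div, abs_of_pos (mul_pos pi_pos hb0), div_le_div_iff₀ (mul_pos pi_pos hb0) (by linarith)]
  nlinarith [pi_gt_three, abs_nonneg a]

theorem summable_of_abs_le_one_div_sq {u : ℤ → ℝ}
    (hu : ∀ n : ℤ, n ≠ 0 → |u n| ≤ 1 / (n : ℝ) ^ 2) : Summable u := by
  refine Summable.of_norm_bounded_eventually
    (Real.summable_one_div_int_pow.2 (by norm_num : 1 < 2)) ?_
  filter_upwards [(Set.finite_singleton (0 : ℤ)).compl_mem_cofinite] with n hn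
  exact hu n hn

theorem summable_cosCoeff {δ : ℝ} (hδ : |δ| ≤ 1 / 4) : Summable (cosCoeff δ) := by
  refine summable_of_abs_le_one_div_sq fun n hn => ?_
  rw [cosCoeff_eq hδ hn, abs_mul, abs_neg, abs_cos_int_mul_pi, one_mul]
  refine abs_div_le_one_div_sq hn ?_ ?_
  · rw [abs_mul]
    nlinarith [abs_sin_le_one (π * δ), abs_nonneg δ, abs_nonneg (sin (π * δ))]
  · nlinarith [one_le_sq_of_int_ne_zero hn, sq_le_of_abs_le_quarter hδ]

theorem summable_sinCoeff {δ : ℝ} (hδ : |δ| ≤ 1 / 4) : Summable (sinCoeff δ) := by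
  refine summable_of_abs_le_one_div_sq fun n hn => ?_
  rw [sinCoeff_eq hδ, abs_mul, abs_neg, abs_cos_int_mul_pi, one_mul]
  refine abs_div_le_one_div_sq hn ?_ ?_
  · rw [abs_mul]
    nlinarith [abs_cos_le_one (π * δ), abs_nonneg δ, abs_nonneg (cos (π * δ))]
  · nlinarith [half_int_sq_ge n, sq_le_of_abs_le_quarter hδ]

theorem hasSum_cosCoeff {δ : ℝ} (hδ : |δ| ≤ 1 / 4) {t : ℝ} (ht : t ∈ Set.Ico (-π) π) :
    HasSum (fun n : ℤ => (cosCoeff δ n : ℂ) * Complex.exp (Complex.I * n * t))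
      (Complex.cos (δ * t)) := by
  refine hasSum_fourier_of_summable_integral (F := fun t : ℝ => Complex.cos (δ * t)) (by fun_prop)
    ?_ (integral_cos_mul_eq_cosCoeff δ) ?_ ht
  · push_cast
    rw [mul_neg, Complex.cos_neg]
  · exact Complex.ofRealCLM.summable (summable_cosCoeff hδ)

theorem exp_I_mul_neg_pi_div_two : Complex.exp (Complex.I * (-π : ℝ) / 2) = -Complex.I := by
  rw [← Complex.exp_neg_pi_div_two_mul_I]
  push_cast
  ring_nf

theorem hasSum_sinCoeff {δ : ℝ} (hδ : |δ| ≤ 1 / 4) {t : ℝ} (ht : t ∈ Set.Ico (-π) π) :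
    HasSum (fun n : ℤ => -Complex.I * (sinCoeff δ n : ℂ) * Complex.exp (Complex.I * n * t))
      (Complex.sin (δ * t) * Complex.exp (Complex.I * t / 2)) := by
  refine hasSum_fourier_of_summable_integral
    (F := fun t : ℝ => Complex.sin (δ * t) * Complex.exp (Complex.I * t / 2)) (by fun_prop)
    ?_ (integral_sin_mul_eq_sinCoeff δ) ?_ ht
  · have h1 : Complex.exp (Complex.I * π / 2) = Complex.I := by
      rw [mul_comm, mul_div_right_comm, Complex.exp_pi_div_two_mul_I]
    rw [h1, exp_I_mul_neg_pi_div_two]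
    push_cast
    rw [mul_neg (δ : ℂ), Complex.sin_neg]
    ring
  · exact (Complex.ofRealCLM.summable (summable_sinCoeff hδ)).mul_left _

theorem exp_I_mul_int_mul_neg_pi (n : ℤ) :
    Complex.exp (Complex.I * n * (-π : ℝ)) = (cos (n * π) : ℝ) := by
  have h : Complex.I * n * (-π : ℝ) = ((-(n * π) : ℝ) : ℂ) * Complex.I := by push_cast; ring
  rw [h, Complex.exp_mul_I, ← Complex.ofReal_cos, ← Complex.ofReal_sin, sin_neg, cos_neg,
    sin_int_mul_pi]
  simp

theorem hasSum_cosBound {α : ℝ} (hα : |α| ≤ 1 / 4) : HasSum (cosBound α) (1 - cos (π * α)) := by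
  have h := hasSum_cosCoeff hα (t := -π) ⟨le_rfl, by linarith [pi_pos]⟩
  simp only [exp_I_mul_int_mul_neg_pi] at h
  have h' : HasSum (fun n : ℤ => cosCoeff α n * cos (n * π)) (cos (π * α)) := by
    rw [← Complex.hasSum_ofReal]
    convert! h using 1
    · ext n; push_cast; ring
    · push_cast; rw [mul_neg, Complex.cos_neg, mul_comm]
  convert! (hasSum_ite_eq (0 : ℤ) (1 : ℝ)).sub h' using 1
  ext n
  rw [cosBound, mul_comm]

theorem hasSum_sinBound {α : ℝ} (hα : |α| ≤ 1 / 4) : HasSum (sinBound α) (sin (π * α)) := by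
  have h := hasSum_sinCoeff hα (t := -π) ⟨le_rfl, by linarith [pi_pos]⟩
  simp only [exp_I_mul_int_mul_neg_pi, exp_I_mul_neg_pi_div_two] at h
  rw [← Complex.hasSum_ofReal]
  convert! h.mul_left (-Complex.I) using 1
  · ext n
    rw [sinBound]
    push_cast
    linear_combination (-Complex.cos (n * π) * sinCoeff α n) * Complex.I_sq
  · push_cast
    rw [mul_neg (α : ℂ), Complex.sin_neg, mul_comm (α : ℂ)]
    linear_combination (Complex.sin (π * α)) * Complex.I_sq

/-- Kadec's expansion of `exp (i δ t) - 1`: its coefficients are bounded, uniformly in `|δ| ≤ α`, by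
those of a series with sum `1 - cos (π α) + sin (π α)`. -/
theorem hasSum_exp_sub_one {δ : ℝ} (hδ : |δ| ≤ 1 / 4) {t : ℝ} (ht : t ∈ Set.Ico (-π) π) :
    HasSum (Sum.elim
        (fun n : ℤ => ((cosCoeff δ n - if n = 0 then 1 else 0 : ℝ) : ℂ) *
          Complex.exp ((n * t : ℝ) * Complex.I))
        (fun n : ℤ => (sinCoeff δ n : ℂ) * Complex.exp (((n - 1 / 2) * t : ℝ) * Complex.I)))
      (Complex.exp (Complex.I * (δ * t)) - 1) := by
  have hc := (hasSum_cosCoeff hδ ht).sub (hasSum_ite_eq (0 : ℤ) (1 : ℂ))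
  have hs := (hasSum_sinCoeff hδ ht).mul_left (Complex.I * Complex.exp (-(Complex.I * t / 2)))
  have e : Complex.exp (Complex.I * (δ * t)) - 1 = (Complex.cos (δ * t) - 1) +
      Complex.I * Complex.exp (-(Complex.I * t / 2)) *
        (Complex.sin (δ * t) * Complex.exp (Complex.I * t / 2)) := by
    have : Complex.exp (-(Complex.I * t / 2)) * Complex.exp (Complex.I * t / 2) = 1 := by
      rw [← Complex.exp_add]; simp
    rw [mul_comm Complex.I, Complex.exp_mul_I]
    linear_combination (-Complex.I * Complex.sin (δ * t)) * this
  rw [e]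
  refine HasSum.sum ?_ ?_
  · convert! hc using 1
    ext n
    rcases eq_or_ne n 0 with rfl | hn
    · simp
    · simp only [Function.comp_apply, Sum.elim_inl, hn, if_false]
      push_cast
      ring_nf
  · convert! hs using 1
    ext n
    have : Complex.exp (((n - 1 / 2) * t : ℝ) * Complex.I) =
        Complex.exp (-(Complex.I * t / 2)) * Complex.exp (Complex.I * n * t) := by
      rw [← Complex.exp_add]
      push_cast
      ring_nf
    simp only [Function.comp_apply, Sum.elim_inr, this]
    linear_combination (Complex.exp (-(Complex.I * t / 2)) * Complex.exp (Complex.I * n * t) *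
      sinCoeff δ n) * Complex.I_sq

theorem norm_toLp_le_mul_norm_toLp {κ : Type*} [Fintype κ] {a b : κ → ℂ} {c : ℝ} (hc : 0 ≤ c)
    (h : ∀ k, ‖a k‖ ≤ c * ‖b k‖) : ‖WithLp.toLp 2 a‖ ≤ c * ‖WithLp.toLp 2 b‖ := by
  rw [EuclideanSpace.norm_eq, EuclideanSpace.norm_eq, ← Real.sqrt_sq hc,
    ← Real.sqrt_mul (sq_nonneg c), Finset.mul_sum]
  refine Real.sqrt_le_sqrt (Finset.sum_le_sum fun k _ => ?_)
  rw [← mul_pow]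
  exact pow_le_pow_left₀ (norm_nonneg _) (h k) 2

/-- If the matrix `U` has norm at most `C` and `φ j k = ∑ i, A i j * E i k` with `‖A i j‖ ≤ B i` and
`‖E i k‖ ≤ 1`, then the entrywise product of `U` and `φ` has norm at most `(∑ i, B i) * C`. -/
theorem norm_sum_mul_mul_le {ι J K : Type*} [Fintype J] [Nonempty J] [Fintype K]
    {U : J → K → ℂ} {C : ℝ} (hC : 0 ≤ C)
    (hU : ∀ v : J → ℂ, ‖WithLp.toLp 2 (fun k => ∑ j, v j * U j k)‖ ≤ C * ‖WithLp.toLp 2 v‖)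
    {A : ι → J → ℂ} {E : ι → K → ℂ} {B : ι → ℝ} {L : ℝ} (hB : HasSum B L)
    (hA : ∀ i j, ‖A i j‖ ≤ B i) (hE : ∀ i k, ‖E i k‖ ≤ 1) {φ : J → K → ℂ}
    (hφ : ∀ j k, HasSum (fun i => A i j * E i k) (φ j k)) (v : J → ℂ) :
    ‖WithLp.toLp 2 (fun k => ∑ j, v j * U j k * φ j k)‖ ≤ L * (C * ‖WithLp.toLp 2 v‖) := by
  have hsum : HasSum (fun i => WithLp.toLp 2 (fun k => ∑ j, v j * U j k * (A i j * E i k)))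
      (WithLp.toLp 2 (fun k => ∑ j, v j * U j k * φ j k)) := by
    have h : HasSum (fun i => (fun k => ∑ j, v j * U j k * (A i j * E i k)))
        (fun k => ∑ j, v j * U j k * φ j k) :=
      Pi.hasSum.2 fun k => hasSum_sum fun j _ => (hφ j k).mul_left _
    exact (PiLp.continuousLinearEquiv 2 ℂ (fun _ : K => ℂ)).symm.hasSum'.2 h
  refine hsum.norm_le_of_bounded (hB.mul_right _) fun i => ?_
  have hBi : 0 ≤ B i := (norm_nonneg _).trans (hA i (Classical.arbitrary J))
  calc ‖WithLp.toLp 2 (fun k => ∑ j, v j * U j k * (A i j * E i k))‖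
      ≤ 1 * ‖WithLp.toLp 2 (fun k => ∑ j, (v j * A i j) * U j k)‖ := by
        refine norm_toLp_le_mul_norm_toLp zero_le_one fun k => ?_
        have : ∑ j, v j * U j k * (A i j * E i k) = E i k * ∑ j, (v j * A i j) * U j k := by
          rw [Finset.mul_sum]
          exact Finset.sum_congr rfl fun j _ => by ring
        rw [this, norm_mul]
        exact mul_le_mul_of_nonneg_right (hE i k) (norm_nonneg _)
    _ ≤ 1 * (C * ‖WithLp.toLp 2 (fun j => v j * A i j)‖) := by
        gcongr
        exact hU _
    _ ≤ 1 * (C * (B i * ‖WithLp.toLp 2 v‖)) := by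
        gcongr
        refine norm_toLp_le_mul_norm_toLp hBi fun j => ?_
        rw [norm_mul, mul_comm]
        exact mul_le_mul_of_nonneg_right (hA i j) (norm_nonneg _)
    _ = B i * (C * ‖WithLp.toLp 2 v‖) := by ring

theorem sum_Icc_zpow_eq_zero {N : ℕ} {z : ℂ} (hz : z ≠ 1) (hzN : z ^ (2 * N + 1) = 1) :
    ∑ k ∈ Finset.Icc (-(N : ℤ)) N, z ^ k = 0 := by
  have hz0 : z ≠ 0 := by
    rintro rfl
    simp at hzN
  have h : ∑ k ∈ Finset.Icc (-(N : ℤ)) N, z ^ k =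
      ∑ m ∈ Finset.range (2 * N + 1), z ^ (-(N : ℤ)) * z ^ m := by
    refine Finset.sum_bij' (fun k _ => (k + N).toNat) (fun m _ => (m : ℤ) - N) ?_ ?_ ?_ ?_ ?_
    · intro k hk; simp only [Finset.mem_Icc, Finset.mem_range] at hk ⊢; lia
    · intro k hk; simp only [Finset.mem_Icc, Finset.mem_range] at hk ⊢; lia
    · intro k hk; simp only [Finset.mem_Icc] at hk ⊢; lia
    · intro k hk; simp only [Finset.mem_range] at hk ⊢; lia
    · intro k hk
      simp only [Finset.mem_Icc] at hk
      rw [← zpow_natCast, ← zpow_add₀ hz0]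
      congr 1
      lia
  rw [h, ← Finset.mul_sum, geom_sum_eq hz, hzN]
  simp

theorem sum_Icc_exp_eq (N : ℕ) {j l : ℤ} (hj : j ∈ Finset.Icc (-(N : ℤ)) N)
    (hl : l ∈ Finset.Icc (-(N : ℤ)) N) :
    ∑ k ∈ Finset.Icc (-(N : ℤ)) N,
      Complex.exp ((k * ((j - l) * (2 * π / (2 * N + 1))) : ℝ) * Complex.I) =
      if j = l then (2 * N + 1 : ℂ) else 0 := by
  split_ifs with hjl
  · subst hjl
    simp only [sub_self, zero_mul, mul_zero, Complex.ofReal_zero, Complex.exp_zero,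
      Finset.sum_const, Int.card_Icc, nsmul_eq_mul, mul_one]
    rw [show ((N : ℤ) + 1 - -(N : ℤ)).toNat = 2 * N + 1 by lia]
    push_cast
    ring
  · have hn : (2 * N + 1 : ℂ) ≠ 0 := by exact_mod_cast (by lia : 2 * N + 1 ≠ 0)
    have hpi : (π : ℂ) ≠ 0 := by exact_mod_cast pi_ne_zero
    set z : ℂ := Complex.exp (((j - l) * (2 * π / (2 * N + 1)) : ℝ) * Complex.I) with hz
    have hpow : ∀ k : ℤ,
        Complex.exp ((k * ((j - l) * (2 * π / (2 * N + 1))) : ℝ) * Complex.I) = z ^ k := by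
      intro k
      rw [hz, ← Complex.exp_int_mul]
      push_cast
      ring_nf
    simp only [hpow]
    refine sum_Icc_zpow_eq_zero ?_ ?_
    · intro h1
      obtain ⟨m, hm⟩ := Complex.exp_eq_one_iff.1 h1
      have h2 : ((j - l : ℤ) : ℂ) = ((m * (2 * N + 1) : ℤ) : ℂ) := by
        push_cast at hm ⊢
        field_simp at hm
        linear_combination hm
      have h3 : j - l = m * (2 * N + 1) := by exact_mod_cast h2
      simp only [Finset.mem_Icc] at hj hl
      rcases lt_trichotomy m 0 with h | h | h
      · nlinarith
      · subst h; lia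
      · nlinarith
    · rw [hz, ← Complex.exp_nat_mul, Complex.exp_eq_one_iff]
      refine ⟨j - l, ?_⟩
      push_cast
      field_simp

/-- Parseval's identity for the discrete Fourier transform on `2N + 1` equispaced nodes. -/
theorem norm_dft_toLp (N : ℕ) (v : Finset.Icc (-(N : ℤ)) N → ℂ) :
    ‖WithLp.toLp 2 (fun k : Finset.Icc (-(N : ℤ)) N =>
      ∑ j : Finset.Icc (-(N : ℤ)) N,
        v j * Complex.exp (((k : ℤ) * ((j : ℤ) * (2 * π / (2 * N + 1))) : ℝ) * Complex.I))‖ =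
      √(2 * N + 1) * ‖WithLp.toLp 2 v‖ := by
  have hcast : (0 : ℝ) ≤ 2 * N + 1 := by positivity
  rw [EuclideanSpace.norm_eq, EuclideanSpace.norm_eq, ← Real.sqrt_mul hcast]
  congr 1
  rw [← Complex.ofReal_inj]
  push_cast
  have hsq : ∀ z : ℂ, ((‖z‖ : ℝ) : ℂ) ^ 2 = z * starRingEnd ℂ z := fun z => by
    rw [Complex.mul_conj']
  simp only [hsq, map_sum, map_mul, Finset.sum_mul_sum]
  rw [Finset.sum_comm, Finset.mul_sum]
  refine Finset.sum_congr rfl fun j _ => ?_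
  rw [Finset.sum_comm]
  have hconj : ∀ (k l : Finset.Icc (-(N : ℤ)) N),
      v j * Complex.exp ((k : ℤ) * ((j : ℤ) * (2 * π / (2 * N + 1))) * Complex.I) *
      (starRingEnd ℂ (v l) * starRingEnd ℂ
        (Complex.exp ((k : ℤ) * ((l : ℤ) * (2 * π / (2 * N + 1))) * Complex.I))) =
      (v j * starRingEnd ℂ (v l)) * Complex.exp
        (((k : ℤ) * (((j : ℤ) - (l : ℤ)) * (2 * π / (2 * N + 1))) : ℝ) * Complex.I) := by
    intro k l
    rw [← Complex.exp_conj]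
    have : ((k : ℤ) * (((j : ℤ) - (l : ℤ)) * (2 * π / (2 * N + 1))) : ℝ) * Complex.I =
        (k : ℤ) * ((j : ℤ) * (2 * π / (2 * N + 1))) * Complex.I + starRingEnd ℂ
          ((k : ℤ) * ((l : ℤ) * (2 * π / (2 * N + 1))) * Complex.I) := by
      simp only [map_mul, map_div₀, map_add, map_one, map_ofNat, map_intCast, map_natCast,
        Complex.conj_ofReal, Complex.conj_I]
      push_cast
      ring
    rw [this, Complex.exp_add]
    ring
  simp only [hconj, ← Finset.mul_sum]
  have hinner : ∀ l : Finset.Icc (-(N : ℤ)) N, ∑ k : Finset.Icc (-(N : ℤ)) N, Complex.exp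
        (((k : ℤ) * (((j : ℤ) - (l : ℤ)) * (2 * π / (2 * N + 1))) : ℝ) * Complex.I) =
      if j = l then (2 * N + 1 : ℂ) else 0 := by
    intro l
    simp only [Subtype.ext_iff]
    rw [← sum_Icc_exp_eq N j.2 l.2]
    exact Finset.sum_coe_sort (Finset.Icc (-(N : ℤ)) N) fun k : ℤ => Complex.exp
      ((k * (((j : ℤ) - (l : ℤ)) * (2 * π / (2 * N + 1))) : ℝ) * Complex.I)
  simp only [hinner, mul_ite, mul_zero, Finset.sum_ite_eq, Finset.mem_univ, if_true]
  ring

/-- The weights of a quadrature rule exact on trigonometric polynomials of degree at most `N` at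
`α`-perturbed nodes have absolute sum at most `2π / (cos (π α) - sin (π α))`. -/
theorem sum_abs_weights_le {α : ℝ} (hα0 : 0 ≤ α) (hα : α < 1 / 4) {N : ℕ} {x : ℤ → ℝ}
    (hx : PerturbedNodes N α x) {w : ℤ → ℝ} (hw : ExactQuad N x w) :
    (cos (π * α) - sin (π * α)) * ∑ j ∈ Finset.Icc (-(N : ℤ)) N, |w j| ≤ 2 * π := by
  have hpi := pi_pos
  have hN0 : (0 : ℝ) < 2 * N + 1 := by positivity
  have hNc : (2 * N + 1 : ℂ) ≠ 0 := by exact_mod_cast hN0.ne'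
  have hh : 0 < 2 * π / (2 * N + 1) := by positivity
  have hα' : |α| ≤ 1 / 4 := by rw [abs_of_nonneg hα0]; exact hα.le
  let J := Finset.Icc (-(N : ℤ)) N
  let o : J := ⟨0, by simp [J]⟩
  have : Nonempty J := ⟨o⟩
  let v : J → ℂ := fun j => w j
  let δ : J → ℝ := fun j => (x j - (j : ℤ) * (2 * π / (2 * N + 1))) / (2 * π / (2 * N + 1))
  have hδ : ∀ j, |δ j| ≤ α := by
    intro j
    rw [abs_div, abs_of_pos hh, div_le_iff₀ hh]
    exact hx j j.2
  let t : J → ℝ := fun k => (k : ℤ) * (2 * π / (2 * N + 1))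
  have ht : ∀ k, t k ∈ Set.Ico (-π) π := by
    rintro ⟨k, hk⟩
    obtain ⟨h1, h2⟩ := Finset.mem_Icc.1 hk
    have h1' : -(N : ℝ) ≤ k := by exact_mod_cast h1
    have h2' : (k : ℝ) ≤ N := by exact_mod_cast h2
    constructor
    · simp only [t]
      rw [mul_div_assoc', le_div_iff₀ hN0]
      nlinarith
    · simp only [t]
      rw [mul_div_assoc', div_lt_iff₀ hN0]
      nlinarith
  let U : J → J → ℂ := fun j k =>
    Complex.exp (((k : ℤ) * ((j : ℤ) * (2 * π / (2 * N + 1))) : ℝ) * Complex.I)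
  have hpert := norm_sum_mul_mul_le (U := U) (C := √(2 * N + 1)) (Real.sqrt_nonneg _)
    (fun v => (norm_dft_toLp N v).le)
    (A := fun i j => Sum.elim (fun n : ℤ => ((cosCoeff (δ j) n - if n = 0 then 1 else 0 : ℝ) : ℂ))
      (fun n : ℤ => (sinCoeff (δ j) n : ℂ)) i)
    (E := fun i k => Complex.exp
      ((Sum.elim (fun n : ℤ => n * t k) (fun n : ℤ => (n - 1 / 2) * t k) i : ℝ) * Complex.I))
    (B := Sum.elim (cosBound α) (sinBound α)) (L := 1 - cos (π * α) + sin (π * α))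
    (HasSum.sum (hasSum_cosBound hα') (hasSum_sinBound hα'))
    (by
      rintro (n | n) j
      · simpa only [Sum.elim_inl, Complex.norm_real, Real.norm_eq_abs] using
          abs_cosCoeff_sub_le_cosBound (hδ j) hα.le n
      · simpa only [Sum.elim_inr, Complex.norm_real, Real.norm_eq_abs] using
          abs_sinCoeff_le_sinBound (hδ j) hα.le n)
    (fun i k => (Complex.norm_exp_ofReal_mul_I _).le)
    (φ := fun j k => Complex.exp (Complex.I * (δ j * t k)) - 1)
    (fun j k => by
      convert! hasSum_exp_sub_one ((hδ j).trans hα.le) (ht k) using 1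
      ext (n | n) <;> rfl) v
  have hexact : ∀ k : J, ∑ j, v j * (U j k * Complex.exp (Complex.I * (δ j * t k))) =
      if k = o then (2 * π : ℂ) else 0 := by
    intro k
    have h := hw (fun s => Complex.exp (Complex.I * (k : ℤ) * s))
      ⟨fun m => if m = k then 1 else 0, fun s => by
        simp only [ite_mul, one_mul, zero_mul, Finset.sum_ite_eq']
        rw [if_pos k.2]⟩
    have hintegral := integral_exp_I_mul_eq_sinc ((k : ℤ) : ℝ)
    push_cast at hintegral
    rw [hintegral, ← Finset.sum_coe_sort] at h
    convert! h using 1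
    · refine Finset.sum_congr rfl fun j _ => ?_
      congr 1
      simp only [U, ← Complex.exp_add, δ, t]
      congr 1
      push_cast
      field_simp
      ring
    · split_ifs with hk
      · simp [hk, o]
      · have hk0 : (k : ℤ) ≠ 0 := fun h0 => hk (Subtype.ext h0)
        have hk1 : π * ((k : ℤ) : ℝ) ≠ 0 := mul_ne_zero pi_ne_zero (by exact_mod_cast hk0)
        rw [sinc_of_ne_zero hk1, mul_comm π, sin_int_mul_pi]
        simp
  have hsplit : WithLp.toLp 2 (fun k => ∑ j, v j * U j k) =
      WithLp.toLp 2 (fun k : J => if k = o then (2 * π : ℂ) else 0) -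
      WithLp.toLp 2 (fun k => ∑ j, v j * U j k *
        (Complex.exp (Complex.I * (δ j * t k)) - 1)) := by
    rw [← WithLp.toLp_sub]
    congr 1
    ext k
    rw [Pi.sub_apply, ← hexact k, ← Finset.sum_sub_distrib]
    exact Finset.sum_congr rfl fun j _ => by ring
  have hdelta : ‖WithLp.toLp 2 (fun k : J => if k = o then (2 * π : ℂ) else 0)‖ =
      2 * π := by
    rw [EuclideanSpace.norm_eq]
    rw [Finset.sum_eq_single o (fun k _ hk => by simp [hk]) (by simp), Real.sqrt_sq (norm_nonneg _)]
    simp [abs_of_pos hpi]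
  have hnorm : √(2 * N + 1) * ‖WithLp.toLp 2 v‖ ≤ 2 * π +
      (1 - cos (π * α) + sin (π * α)) * (√(2 * N + 1) * ‖WithLp.toLp 2 v‖) := by
    rw [← hdelta]
    refine le_trans ?_ (add_le_add_right hpert _)
    rw [← norm_dft_toLp N v]
    change ‖WithLp.toLp 2 (fun k => ∑ j, v j * U j k)‖ ≤ _
    rw [hsplit]
    exact norm_sub_le _ _
  have hcs : ∑ j ∈ Finset.Icc (-(N : ℤ)) N, |w j| ≤ √(2 * N + 1) * ‖WithLp.toLp 2 v‖ := by
    rw [EuclideanSpace.norm_eq, ← Real.sqrt_mul hN0.le]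
    refine Real.le_sqrt_of_sq_le ?_
    have h := sq_sum_le_card_mul_sum_sq (s := Finset.Icc (-(N : ℤ)) N) (f := fun j => |w j|)
    have hcard : ((#(Finset.Icc (-(N : ℤ)) N) : ℕ) : ℝ) = 2 * N + 1 := by
      rw [Int.card_Icc, show ((N : ℤ) + 1 - -(N : ℤ)).toNat = 2 * N + 1 by lia]
      push_cast
      ring
    rw [hcard, ← Finset.sum_coe_sort _ (fun j => |w j| ^ 2)] at h
    simpa only [v, Complex.norm_real, Real.norm_eq_abs] using h
  have hμ : 0 ≤ cos (π * α) - sin (π * α) := by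
    rw [sub_nonneg, ← cos_pi_div_two_sub]
    exact cos_le_cos_of_nonneg_of_le_pi (by nlinarith) (by nlinarith) (by nlinarith)
  nlinarith [mul_le_mul_of_nonneg_left hcs hμ]

theorem norm_le_supIco {g : ℝ → ℂ} (hg : Continuous g) (hper : Function.Periodic g (2 * π))
    (t : ℝ) : ‖g t‖ ≤ supIco g := by
  obtain ⟨y, hy, hty⟩ := hper.exists_mem_Ico (by positivity : (0 : ℝ) < 2 * π) t (-π)
  rw [hty]
  have hbdd : BddAbove (Set.range fun s : Set.Ico (-π) π => ‖g s‖) := by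
    obtain ⟨M, hM⟩ := (isCompact_Icc (a := -π) (b := π)).exists_bound_of_continuousOn
      hg.continuousOn
    exact ⟨M, by rintro _ ⟨s, rfl⟩; exact hM s ⟨s.2.1, s.2.2.le⟩⟩
  exact le_ciSup hbdd (⟨y, hy.1, by linarith [hy.2]⟩ : Set.Ico (-π) π)

theorem IsTrigPoly.continuous {N : ℕ} {q : ℝ → ℂ} (hq : IsTrigPoly N q) : Continuous q := by
  obtain ⟨c, hc⟩ := hq
  rw [funext hc]
  fun_prop

theorem IsTrigPoly.periodic {N : ℕ} {q : ℝ → ℂ} (hq : IsTrigPoly N q) :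
    Function.Periodic q (2 * π) := by
  obtain ⟨c, hc⟩ := hq
  intro t
  rw [hc, hc]
  refine Finset.sum_congr rfl fun k _ => ?_
  congr 1
  rw [Complex.exp_eq_exp_iff_exists_int]
  exact ⟨k, by push_cast; ring⟩

/-- quadrature error bound at α-perturbed nodes for α < 1/4 in terms of the
best approximation error of the integrand by trigonometric polynomials. -/
theorem quadrature_error_bound (f : ℝ → ℂ) (hfc : Continuous f)
    (hfp : Function.Periodic f (2*π))
    (α : ℝ) (hα0 : 0 ≤ α) (hα : α < 1/4) (N : ℕ) (hN : 0 < N)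
    (x : ℤ → ℝ) (hx : PerturbedNodes N α x)
    (w : ℤ → ℝ) (hw : ExactQuad N x w) :
    ∀ q : ℝ → ℂ, IsTrigPoly N q →
      ‖(∑ j ∈ Finset.Icc (-(N:ℤ)) (N:ℤ), (w j : ℂ) * f (x j)) - ∫ t in (-π)..π, f t‖ ≤
        (4*π / (Real.cos (π*α) - Real.sin (π*α))) * supIco (fun t => f t - q t) := by
  intro q hq
  have hpi := pi_pos
  have hqc := hq.continuous
  set M := supIco (fun t => f t - q t)
  have hle : ∀ t, ‖f t - q t‖ ≤ M := norm_le_supIco (hfc.sub hqc) (hfp.sub hq.periodic)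
  have hM0 : 0 ≤ M := (norm_nonneg _).trans (hle 0)
  have hμ : 0 < cos (π * α) - sin (π * α) := by
    rw [sub_pos, ← cos_pi_div_two_sub]
    exact cos_lt_cos_of_nonneg_of_le_pi (by nlinarith) (by nlinarith) (by nlinarith)
  have hμ1 : cos (π * α) - sin (π * α) ≤ 1 := by
    have : 0 ≤ sin (π * α) := sin_nonneg_of_nonneg_of_le_pi (by positivity) (by nlinarith)
    linarith [cos_le_one (π * α)]
  have hW := sum_abs_weights_le hα0 hα hx hw
  have herr : (∑ j ∈ Finset.Icc (-(N:ℤ)) (N:ℤ), (w j : ℂ) * f (x j)) - ∫ t in (-π)..π, f t =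
      (∑ j ∈ Finset.Icc (-(N:ℤ)) (N:ℤ), (w j : ℂ) * (f (x j) - q (x j))) -
        ∫ t in (-π)..π, (f t - q t) := by
    rw [intervalIntegral.integral_sub (hfc.intervalIntegrable _ _) (hqc.intervalIntegrable _ _),
      ← hw q hq]
    simp only [mul_sub, Finset.sum_sub_distrib]
    ring
  have hsum : ‖∑ j ∈ Finset.Icc (-(N:ℤ)) (N:ℤ), (w j : ℂ) * (f (x j) - q (x j))‖ ≤
      (∑ j ∈ Finset.Icc (-(N:ℤ)) (N:ℤ), |w j|) * M := by
    rw [Finset.sum_mul]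
    refine norm_sum_le_of_le _ fun j _ => ?_
    rw [norm_mul, Complex.norm_real, Real.norm_eq_abs]
    exact mul_le_mul_of_nonneg_left (hle _) (abs_nonneg _)
  have hintegral : ‖∫ t in (-π)..π, (f t - q t)‖ ≤ M * (2 * π) := by
    refine (intervalIntegral.norm_integral_le_of_norm_le_const fun t _ => hle t).trans_eq ?_
    rw [sub_neg_eq_add, abs_of_pos (by positivity)]
    ring
  rw [herr]
  refine (norm_sub_le _ _).trans ((add_le_add hsum hintegral).trans ?_)
  rw [div_mul_eq_mul_div, le_div_iff₀ hμ]
  nlinarith [mul_le_mul_of_nonneg_right hW hM0,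
    mul_le_mul_of_nonneg_right hμ1 (mul_nonneg hM0 hpi.le)]
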